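/- Let V ⊆ ℝ^p be a finite set, let N = {δ ∈ ℝ^p : ⟨v, δ⟩ ≤ 0 for all v ∈ V}, and let L = {v ∈ V : −v ∈ pos V}. If L ≠ V, then a vector δ ∈ ℝ^p belongs to the relative interior of N (the interior of N relative to its affine hull) if and only if ⟨w, δ⟩ = 0 for all w ∈ L and ⟨w, δ⟩ < 0 for all w ∈ V \ L. -/

import Mathlib

open Set
open scoped RealInnerProductSpace

/-- `posCone V` is the set of all nonnegative linear combinations of elements of the finite
set `V`, i.e. the finitely generated convex cone spanned by `V`. -/
def posCone {p : ℕ} (V : Finset (EuclideanSpace ℝ (Fin p))) :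
    Set (EuclideanSpace ℝ (Fin p)) :=
  {x | ∃ c : EuclideanSpace ℝ (Fin p) → ℝ, (∀ v ∈ V, 0 ≤ c v) ∧ x = ∑ v ∈ V, c v • v}

/-!
An affine function attaining its maximum over `s` at a point of the relative interior of `s` is
constant on `s`. Hence a point of a polyhedron is relatively interior exactly when the only
constraints active there are those active on the whole polyhedron. For the polar cone of `V`,
Farkas' lemma identifies the constraints `v` active everywhere as those with `-v ∈ pos V`.
-/

open Filter Topology PointedCone

section Farkas

variable {𝕜 M N : Type*} [Field 𝕜] [LinearOrder 𝕜] [IsStrictOrderedRing 𝕜]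
  [AddCommGroup M] [Module 𝕜 M] [AddCommGroup N] [Module 𝕜 N]
  {p : M →ₗ[𝕜] N →ₗ[𝕜] 𝕜} {s : Set M} {b x : M}

theorem exists_mem_hull_insert_apply_eq {c g : M} {y : N} (hc : c ∈ hull 𝕜 s)
    (hcb : ∀ z, p g z = 0 → p c z = p b z) (hy : y ∈ dual p s) (hgy : p g y < 0)
    (hby : p b y ≤ 0) : ∃ d ∈ hull 𝕜 (insert g s), p d = p b := by
  have hcy : 0 ≤ p c y := by
    rw [← dual_hull] at hy
    exact hy hc
  have ht : 0 ≤ (p b y - p c y) / p g y := div_nonneg_of_nonpos (by linarith) hgy.le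
  refine ⟨c + ((p b y - p c y) / p g y) • g, add_mem ?_ ?_, LinearMap.ext fun z ↦ ?_⟩
  · exact Submodule.span_mono (subset_insert g s) hc
  · exact PointedCone.smul_mem _ ht (subset_hull (mem_insert g s))
  · have hz : p c (z - (p g z / p g y) • y) = p b (z - (p g z / p g y) • y) :=
      hcb _ (by simp [hgy.ne])
    simp only [map_sub, map_smul, smul_eq_mul] at hz
    simp only [map_add, map_smul, LinearMap.add_apply, LinearMap.smul_apply, smul_eq_mul]
    linear_combination hz

theorem exists_mem_hull_apply_eq_of_mem_dual_dual (hs : s.Finite)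
    (hb : b ∈ dual p.flip (dual p s : Set N)) : ∃ c ∈ hull 𝕜 s, p c = p b := by
  induction s, hs using Set.Finite.induction_on generalizing N with
  | empty =>
    refine ⟨0, zero_mem _, LinearMap.ext fun y ↦ le_antisymm ?_ ?_⟩
    · simpa using hb (x := y) (by simp)
    · simpa using hb (x := -y) (by simp)
  | @insert g s _ _ ih =>
    by_cases hbs : b ∈ dual p.flip (dual p s : Set N)
    · obtain ⟨c, hc, hcb⟩ := ih hbs
      exact ⟨c, Submodule.span_mono (subset_insert g s) hc, hcb⟩
    obtain ⟨y, hy, hby⟩ : ∃ y ∈ dual p s, p b y < 0 := by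
      simpa using hbs
    have hgy : p g y < 0 := by
      by_contra! hgy
      exact hby.not_ge (hb (forall_mem_insert.2 ⟨hgy, hy⟩))
    -- On the hyperplane `p g = 0` the constraint `g` is void, so the induction applies there.
    obtain ⟨c, hc, hcb⟩ := ih (p := p.compl₂ (p g).ker.subtype) fun z hz ↦
      hb (forall_mem_insert.2 ⟨z.2.ge, hz⟩)
    exact exists_mem_hull_insert_apply_eq hc
      (fun z hz ↦ LinearMap.congr_fun hcb ⟨z, hz⟩) hy hgy hby.le

theorem dual_flip_dual_of_finite (hp : Function.Injective p) (hs : s.Finite) :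
    dual p.flip (dual p s : Set N) = hull 𝕜 s := by
  refine le_antisymm (fun b hb ↦ ?_) (Submodule.span_le.2 subset_dual_dual)
  obtain ⟨c, hc, hcb⟩ := exists_mem_hull_apply_eq_of_mem_dual_dual hs hb
  exact hp hcb ▸ hc

theorem neg_mem_hull_iff_forall_polar_apply_eq_zero (hp : Function.Injective p) (hs : s.Finite)
    (hx : x ∈ s) : -x ∈ hull 𝕜 s ↔ ∀ y, (∀ v ∈ s, p v y ≤ 0) → p x y = 0 := by
  rw [← dual_flip_dual_of_finite hp hs]
  calc
    -x ∈ dual p.flip (dual p s : Set N) ↔ ∀ z ∈ dual p s, 0 ≤ p (-x) z := Iff.rfl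
    _ ↔ ∀ y, (∀ v ∈ s, p v y ≤ 0) → 0 ≤ p x y := by
      rw [neg_surjective.forall]
      simp
    _ ↔ ∀ y, (∀ v ∈ s, p v y ≤ 0) → p x y = 0 :=
      forall₂_congr fun y hy ↦ (hy x hx).ge_iff_eq

end Farkas

theorem eqOn_affineSpan {R V P W Q : Type*} [Ring R] [AddCommGroup V] [Module R V] [AddTorsor V P]
    [AddCommGroup W] [Module R W] [AddTorsor W Q] {f g : P →ᵃ[R] Q} {s : Set P}
    (h : EqOn f g s) : EqOn f g (affineSpan R s) := fun x hx ↦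
  affineSpan_induction (p := fun y ↦ f y = g y) hx (fun _ hy ↦ h hy) fun c u v w hu hv hw ↦ by
    simp only [AffineMap.map_vadd, map_smul, AffineMap.linearMap_vsub, hu, hv, hw]

theorem mem_intrinsicInterior_iff_mem_nhdsWithin {𝕜 V P : Type*} [Ring 𝕜] [AddCommGroup V]
    [Module 𝕜 V] [TopologicalSpace P] [AddTorsor V P] {s : Set P} {x : P} :
    x ∈ intrinsicInterior 𝕜 s ↔ x ∈ affineSpan 𝕜 s ∧ s ∈ 𝓝[affineSpan 𝕜 s] x := by
  constructor
  · rintro ⟨y, hy, rfl⟩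
    exact ⟨y.2, preimage_coe_mem_nhds_subtype.1 (mem_interior_iff_mem_nhds.1 hy)⟩
  · rintro ⟨hx, hs⟩
    exact ⟨⟨x, hx⟩, mem_interior_iff_mem_nhds.2 (preimage_coe_mem_nhds_subtype.2 hs), rfl⟩

section IntrinsicInterior

variable {V P : Type*} [AddCommGroup V] [Module ℝ V] [TopologicalSpace V] [ContinuousSMul ℝ V]
  [TopologicalSpace P] [AddTorsor V P] [IsTopologicalAddTorsor P] {x : P}

theorem eqOn_of_isMaxOn_of_mem_intrinsicInterior {f : P →ᵃ[ℝ] ℝ} {s : Set P}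
    (hmax : IsMaxOn f s x) (hx : x ∈ intrinsicInterior ℝ s) :
    EqOn f (Function.const P (f x)) s := by
  intro y hy
  obtain ⟨hx, hs⟩ := mem_intrinsicInterior_iff_mem_nhdsWithin.1 hx
  have hline : Tendsto (AffineMap.lineMap x y : ℝ → P) (𝓝 0) (𝓝[affineSpan ℝ s] x) :=
    tendsto_nhdsWithin_iff.2 ⟨AffineMap.lineMap_continuous.tendsto' _ _ (by simp),
      .of_forall fun t ↦ AffineMap.lineMap_mem t hx (subset_affineSpan ℝ s hy)⟩
  have hmem : ∀ᶠ t : ℝ in 𝓝[<] 0, AffineMap.lineMap x y t ∈ s :=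
    (hline.eventually_mem hs).filter_mono nhdsWithin_le_nhds
  obtain ⟨t, hts, ht : t < 0⟩ := (hmem.and self_mem_nhdsWithin).exists
  have hft : t * (f y - f x) ≤ 0 := by
    simpa [AffineMap.apply_lineMap, AffineMap.lineMap_apply] using hmax hts
  exact le_antisymm (hmax hy) (by simpa using nonneg_of_mul_nonpos_right hft ht)

theorem mem_intrinsicInterior_polyhedron_iff {ι : Type*} {f : ι → P →ᵃ[ℝ] ℝ} {s : Set ι}
    (hs : s.Finite) (hf : ∀ i ∈ s, Continuous (f i)) :
    x ∈ intrinsicInterior ℝ {y | ∀ i ∈ s, f i y ≤ 0} ↔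
      (∀ i ∈ s, f i x ≤ 0) ∧
        ∀ i ∈ s, f i x = 0 → ∀ y, (∀ j ∈ s, f j y ≤ 0) → f i y = 0 := by
  constructor
  · refine fun hx ↦ ⟨intrinsicInterior_subset hx, fun i hi hfx y hy ↦ ?_⟩
    have hmax : IsMaxOn (f i) {y | ∀ j ∈ s, f j y ≤ 0} x := fun z hz ↦ by
      simpa [hfx] using hz i hi
    simpa [hfx] using eqOn_of_isMaxOn_of_mem_intrinsicInterior hmax hx hy
  · rintro ⟨hx, hactive⟩
    refine mem_intrinsicInterior_iff_mem_nhdsWithin.2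
      ⟨subset_affineSpan ℝ _ hx, (eventually_all_finite hs).2 fun i hi ↦ ?_⟩
    rcases (hx i hi).lt_or_eq with hneg | hzero
    · filter_upwards [nhdsWithin_le_nhds ((hf i hi).tendsto x (Iio_mem_nhds hneg))] with y hy
      exact hy.le
    · have hspan : EqOn (f i) (AffineMap.const ℝ P 0) (affineSpan ℝ {y | ∀ j ∈ s, f j y ≤ 0}) :=
        eqOn_affineSpan fun y hy ↦ hactive i hi hzero y hy
      filter_upwards [self_mem_nhdsWithin] with y hy
      exact (hspan hy).le

end IntrinsicInterior

theorem mem_intrinsicInterior_polarCone_iff_general {M N : Type*} [AddCommGroup M] [Module ℝ M]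
    [AddCommGroup N] [Module ℝ N] [TopologicalSpace N] [IsTopologicalAddGroup N]
    [ContinuousSMul ℝ N] {p : M →ₗ[ℝ] N →ₗ[ℝ] ℝ} (hp : Function.Injective p) {s : Set M}
    (hs : s.Finite) (hcont : ∀ v ∈ s, Continuous (p v)) (y : N) :
    y ∈ intrinsicInterior ℝ {y' | ∀ v ∈ s, p v y' ≤ 0} ↔
      (∀ w ∈ {v | v ∈ s ∧ -v ∈ hull ℝ s}, p w y = 0) ∧
        ∀ w ∈ s \ {v | v ∈ s ∧ -v ∈ hull ℝ s}, p w y < 0 := by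
  refine (mem_intrinsicInterior_polyhedron_iff (f := fun v ↦ (p v).toAffineMap) hs hcont).trans ?_
  have hL {v : M} (hv : v ∈ s) := neg_mem_hull_iff_forall_polar_apply_eq_zero hp hs hv
  constructor
  · rintro ⟨hy, hactive⟩
    exact ⟨fun w hw ↦ (hL hw.1).1 hw.2 y hy, fun w hw ↦ (hy w hw.1).lt_of_ne fun hwy ↦
      hw.2 ⟨hw.1, (hL hw.1).2 (hactive w hw.1 hwy)⟩⟩
  · rintro ⟨hzero, hneg⟩
    have hsign {w : M} (hw : w ∈ s) : p w y < 0 ∨ -w ∈ hull ℝ s ∧ p w y = 0 := by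
      by_cases hwL : -w ∈ hull ℝ s
      · exact .inr ⟨hwL, hzero w ⟨hw, hwL⟩⟩
      · exact .inl (hneg w ⟨hw, fun h ↦ hwL h.2⟩)
    exact ⟨fun w hw ↦ (hsign hw).elim le_of_lt fun h ↦ h.2.le,
      fun w hw hwy ↦ (hL hw).1 ((hsign hw).resolve_left hwy.not_lt).1⟩

theorem posCone_eq_hull {p : ℕ} (V : Finset (EuclideanSpace ℝ (Fin p))) :
    posCone V = hull ℝ (V : Set (EuclideanSpace ℝ (Fin p))) := by
  ext x
  constructor
  · rintro ⟨c, hc, rfl⟩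
    exact sum_mem fun v hv ↦ PointedCone.smul_mem _ (hc v hv) (subset_hull hv)
  · intro hx
    obtain ⟨c, -, rfl⟩ := Submodule.mem_span_finset.1 hx
    exact ⟨fun v ↦ c v, fun v _ ↦ (c v).2, rfl⟩

/-- For a finite set `V ⊆ ℝ^p` with polar cone `N = {δ | ⟪v, δ⟫ ≤ 0 for all v ∈ V}` and
linearity `L = {v ∈ V | −v ∈ pos V}`, if `L ≠ V` then `δ` lies in the relative interior of
`N` iff `⟪w, δ⟫ = 0` for all `w ∈ L` and `⟪w, δ⟫ < 0` for all `w ∈ V \ L`. -/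
theorem mem_intrinsicInterior_polarCone_iff {p : ℕ}
    (V : Finset (EuclideanSpace ℝ (Fin p)))
    (hL : {v : EuclideanSpace ℝ (Fin p) | v ∈ V ∧ -v ∈ posCone V} ≠
      (V : Set (EuclideanSpace ℝ (Fin p))))
    (δ : EuclideanSpace ℝ (Fin p)) :
    δ ∈ intrinsicInterior ℝ
        {δ' : EuclideanSpace ℝ (Fin p) | ∀ v ∈ V, ⟪v, δ'⟫ ≤ 0} ↔
      (∀ w ∈ {v : EuclideanSpace ℝ (Fin p) | v ∈ V ∧ -v ∈ posCone V}, ⟪w, δ⟫ = 0) ∧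
        (∀ w ∈ (V : Set (EuclideanSpace ℝ (Fin p))) \
            {v : EuclideanSpace ℝ (Fin p) | v ∈ V ∧ -v ∈ posCone V}, ⟪w, δ⟫ < 0) := by
  simpa [posCone_eq_hull] using mem_intrinsicInterior_polarCone_iff_general
    (p := innerₗ (EuclideanSpace ℝ (Fin p))) (fun _ _ h ↦ ext_inner_right ℝ (LinearMap.congr_fun h))
    V.finite_toSet (fun v _ ↦ (innerSL ℝ v).continuous) δ
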